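/- Let C = {N_i, σ_{i,j} | i,j ∈ D and i ≤ j} and D = {M_i, π_{i,j} | i,j ∈ D and i ≤ j} be well-founded directed systems of models of set theory with the same underlying directed partial order (D,≤), with direct limits N_∞ and M_∞ and direct limit maps σ_{i,∞} and π_{i,∞}. Suppose that: (1) N_i ⊆ M_i for all i ∈ D; (2) N_i satisfies 'V = HOD' (every set is ordinal definable) for all i ∈ D; and (3) N_∞, M_∞, and the family {π_{i,∞}}_{i∈D} are uniformly definable over D. Then N_∞ ⊆ M_∞. -/

import Mathlib

/- ## A framework for transitive class/set models of fragments of ZFC,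
     inside the universe `ZFSet` of ZF sets. -/

open FirstOrder FirstOrder.Language

/-- The language of set theory: a single binary relation symbol `∈`. -/
inductive SetRelSym : ℕ → Type
  | mem : SetRelSym 2

/-- The first-order language of set theory. -/
def setL : FirstOrder.Language := ⟨fun _ => Empty, SetRelSym⟩

/-- Evaluation of a term of the language of set theory (terms are just variables). -/
def tval {n : ℕ} (v : Fin n → ZFSet) : setL.Term (Empty ⊕ Fin n) → ZFSet
  | .var (Sum.inl e) => e.elim
  | .var (Sum.inr i) => v i
  | .func f _ => f.elim

/-- Tarskian satisfaction of a formula of the language of set theory in a class `S` of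
ZF-sets (equipped with true membership), under the assignment `v`. -/
def ZSat (S : Set ZFSet) : ∀ {n : ℕ}, setL.BoundedFormula Empty n → (Fin n → ZFSet) → Prop
  | _, .falsum, _ => False
  | _, .equal t u, v => tval v t = tval v u
  | _, .rel R ts, v =>
      match R with
      | SetRelSym.mem => tval v (ts 0) ∈ tval v (ts 1)
  | _, .imp φ ψ, v => ZSat S φ v → ZSat S ψ v
  | _, .all φ, v => ∀ x ∈ S, ZSat S φ (Fin.snoc v x)

/-- Satisfaction of a sentence in a class of ZF-sets. -/
def SatS (S : Set ZFSet) (σ : setL.Sentence) : Prop := ZSat S σ finZeroElim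

/-- A class of ZF-sets is transitive. -/
def IsTransClass (S : Set ZFSet) : Prop := ∀ x ∈ S, ∀ y ∈ x, y ∈ S

/-- `r` is a well-ordering of the set `x`, from the point of view of the class `S`
(Kuratowski pairs code the relation; minimality is required for nonempty subsets of `x`
lying in `S`). -/
def WellOrders (S : Set ZFSet) (r x : ZFSet) : Prop :=
  (∀ a ∈ x, ZFSet.pair a a ∉ r) ∧
  (∀ a ∈ x, ∀ b ∈ x, ∀ c ∈ x, ZFSet.pair a b ∈ r → ZFSet.pair b c ∈ r → ZFSet.pair a c ∈ r) ∧
  (∀ a ∈ x, ∀ b ∈ x, a ≠ b → (ZFSet.pair a b ∈ r ∨ ZFSet.pair b a ∈ r)) ∧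
  (∀ y ∈ S, (∀ z ∈ y, z ∈ x) → y ≠ ∅ → ∃ m ∈ y, ∀ z ∈ y, ZFSet.pair z m ∉ r)

/-- `S` is a transitive model of ZFC⁻, i.e. of ZFC stated with the Replacement Scheme and
the Well-Ordering Theorem but without the Power Set Axiom.  (Extensionality and Foundation
are automatic for transitive classes of ZF-sets.) -/
def ModelsZFCminus (S : Set ZFSet) : Prop :=
  IsTransClass S ∧
  (∅ : ZFSet) ∈ S ∧
  (∀ x ∈ S, ∀ y ∈ S, ({x, y} : ZFSet) ∈ S) ∧
  (∀ x ∈ S, (ZFSet.sUnion x : ZFSet) ∈ S) ∧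
  ZFSet.omega ∈ S ∧
  (∀ (n : ℕ) (φ : setL.BoundedFormula Empty (n + 1)) (p : Fin n → ZFSet),
    (∀ i, p i ∈ S) → ∀ a ∈ S, ∃ b ∈ S, ∀ y, y ∈ b ↔ (y ∈ a ∧ ZSat S φ (Fin.snoc p y))) ∧
  (∀ (n : ℕ) (φ : setL.BoundedFormula Empty (n + 2)) (p : Fin n → ZFSet),
    (∀ i, p i ∈ S) → ∀ a ∈ S,
      (∀ x ∈ a, ∃! y, y ∈ S ∧ ZSat S φ (Fin.snoc (Fin.snoc p x) y)) →
      ∃ b ∈ S, ∀ y, y ∈ b ↔ ∃ x ∈ a, y ∈ S ∧ ZSat S φ (Fin.snoc (Fin.snoc p x) y)) ∧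
  (∀ x ∈ S, ∃ r ∈ S, WellOrders S r x)

/-- `S` is a transitive model of ZFC. -/
def ModelsZFC (S : Set ZFSet) : Prop :=
  ModelsZFCminus S ∧ ∀ x ∈ S, ∃ p ∈ S, ∀ y, y ∈ p ↔ (y ∈ S ∧ y ⊆ x)

/-- `f` is (the graph of) a surjection of `a` onto `b`. -/
def SurjFun (f a b : ZFSet) : Prop :=
  ZFSet.IsFunc a b f ∧ ∀ y ∈ b, ∃ x ∈ a, ZFSet.pair x y ∈ f

/-- `f` is (the graph of) an injection of `a` into `b`. -/
def InjFun (f a b : ZFSet) : Prop :=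
  ZFSet.IsFunc a b f ∧ ∀ x ∈ a, ∀ x' ∈ a, ∀ y, ZFSet.pair x y ∈ f → ZFSet.pair x' y ∈ f → x = x'

/-- `f` is (the graph of) a cofinal function from `β` into the ordinal `α`. -/
def CofinalFun (f β α : ZFSet) : Prop :=
  ZFSet.IsFunc β α f ∧ ∀ ξ ∈ α, ∃ η ∈ β, ∃ ζ, ZFSet.pair η ζ ∈ f ∧ (ξ ∈ ζ ∨ ξ = ζ)

/-- `μ = cof(α)` as computed inside the class `S` (for `S = Set.univ`, the true cofinality). -/
def IsCofOf (S : Set ZFSet) (α μ : ZFSet) : Prop :=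
  μ ∈ S ∧ μ.IsOrdinal ∧ (∃ f ∈ S, CofinalFun f μ α) ∧
  ∀ ν ∈ S, ZFSet.IsOrdinal ν → (∃ f ∈ S, CofinalFun f ν α) → μ ⊆ ν

/-- `κ` is a cardinal from the point of view of the class `S`
(for `S = Set.univ`, a true cardinal). -/
def IsCardIn (S : Set ZFSet) (κ : ZFSet) : Prop :=
  κ.IsOrdinal ∧ ∀ α ∈ κ, ∀ f ∈ S, ¬ SurjFun f α κ

/-- `μ` is an (infinite) regular cardinal from the point of view of the class `S`. -/
def IsRegularIn (S : Set ZFSet) (μ : ZFSet) : Prop :=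
  ZFSet.omega ⊆ μ ∧ IsCardIn S μ ∧ IsCofOf S μ μ

/-- `ν = μ⁺`, the cardinal successor of `μ`, as computed in the class `S`. -/
def CardSuccIn (S : Set ZFSet) (μ ν : ZFSet) : Prop :=
  ν ∈ S ∧ IsCardIn S ν ∧ μ ∈ ν ∧ ∀ ξ ∈ S, IsCardIn S ξ → μ ∈ ξ → ν ⊆ ξ

/-- `μ` is the largest cardinal of the model `S`. -/
def IsLargestCardIn (S : Set ZFSet) (μ : ZFSet) : Prop :=
  μ ∈ S ∧ IsCardIn S μ ∧ ∀ x ∈ S, IsCardIn S x → x ⊆ μ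

/-- `α = sup A`, for `A` a collection of ordinals: `α` is the least ordinal above all of them. -/
def IsSupOf (α : ZFSet) (A : Set ZFSet) : Prop :=
  α.IsOrdinal ∧ (∀ a ∈ A, a ⊆ α) ∧ ∀ β : ZFSet, β.IsOrdinal → (∀ a ∈ A, a ⊆ β) → α ⊆ β

/-- `π` is an elementary embedding (for the language of set theory) from the class `S`
into the class `T`. -/
def IsElem (S T : Set ZFSet) (π : ZFSet → ZFSet) : Prop :=
  (∀ x ∈ S, π x ∈ T) ∧
  ∀ (n : ℕ) (φ : setL.BoundedFormula Empty n) (v : Fin n → ZFSet),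
    (∀ i, v i ∈ S) → (ZSat S φ v ↔ ZSat T φ (fun i => π (v i)))

/-- A directed system of models of set theory: a directed partial order `ι`, transitive
(set) models `M i` of ZFC, and commuting elementary embeddings `pi i j : M i → M j`. -/
structure DirSystem.{u_1} (ι : Type) [PartialOrder ι] where
  M : ι → ZFSet.{u_1}
  pi : ι → ι → ZFSet → ZFSet
  directed : ∀ i j : ι, ∃ k, i ≤ k ∧ j ≤ k
  zfc : ∀ i, ModelsZFC (M i).toSet
  elem : ∀ i j, i ≤ j → IsElem (M i).toSet (M j).toSet (pi i j)
  map_id : ∀ i, ∀ x ∈ M i, pi i i x = x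
  map_comp : ∀ i j k, i ≤ j → j ≤ k → ∀ x ∈ M i, pi j k (pi i j x) = pi i k x

/-- `limit` (a transitive class) together with the maps `e i : M i → limit` is the
(transitivized) direct limit of the well-founded directed system `D`: the maps are
elementary, commute with the system maps, and every element of the limit is in the
range of some `e i`. -/
structure IsDirLimit {ι : Type} [PartialOrder ι] (D : DirSystem ι)
    (limit : Set ZFSet) (e : ι → ZFSet → ZFSet) : Prop where
  trans : IsTransClass limit
  elem : ∀ i, IsElem (D.M i).toSet limit (e i)
  compat : ∀ i j, i ≤ j → ∀ x ∈ D.M i, e j (D.pi i j x) = e i x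
  exhaust : ∀ y ∈ limit, ∃ i, ∃ x ∈ D.M i, e i x = y

/-- The `A`-indexed family of unary relations (sets) `R i` is uniformly definable over the
directed system `D`: some formula `φ(v, u)` with a parameter `a ∈ M i` (moved along by the
system maps) defines `R j` over `M j` for all `j ≥ i`. -/
def UnifDef1 {ι : Type} [PartialOrder ι] (D : DirSystem ι) (A : Set ι)
    (R : ι → Set ZFSet) : Prop :=
  ∃ i ∈ A, ∃ a, a ∈ D.M i ∧ ∃ φ : setL.BoundedFormula Empty 2,
    ∀ j, i ≤ j → j ∈ A ∧ (∀ x ∈ R j, x ∈ D.M j) ∧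
      ∀ x, x ∈ D.M j → (x ∈ R j ↔ ZSat (D.M j).toSet φ ![x, D.pi i j a])

/-- The family of binary relations `R i` is uniformly definable over the directed system `D`. -/
def UnifDef2 {ι : Type} [PartialOrder ι] (D : DirSystem ι)
    (R : ι → ZFSet → ZFSet → Prop) : Prop :=
  ∃ i, ∃ a, a ∈ D.M i ∧ ∃ φ : setL.BoundedFormula Empty 3,
    ∀ j, i ≤ j → (∀ x y, R j x y → x ∈ D.M j ∧ y ∈ D.M j) ∧
      ∀ x, x ∈ D.M j → ∀ y, y ∈ D.M j →
        (R j x y ↔ ZSat (D.M j).toSet φ ![x, y, D.pi i j a])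

/-- `S ⊨ "V = HOD"`: every member of `S` is (the unique element) definable over `(S, ∈)`
from ordinal parameters. -/
def ModelsVeqHOD (S : Set ZFSet) : Prop :=
  ∀ x ∈ S, ∃ (n : ℕ) (φ : setL.BoundedFormula Empty (n + 1)) (p : Fin n → ZFSet),
    (∀ i, p i ∈ S ∧ (p i).IsOrdinal) ∧ ∀ y ∈ S, (ZSat S φ (Fin.snoc p y) ↔ y = x)

/-! As an elementary direct limit of the `N_i`, `N_∞` satisfies `V = HOD`. If `N_∞ ⊈ M_∞`, some
`x ∈ N_∞ ∖ M_∞` has all its elements in `M_∞`, and `x` is definable in `N_∞` from ordinals. By the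
uniform definability of `N_∞` and `M_∞`, choosing the lexicographically least ordinals which define
such an `x` makes `x` definable in the same way over all `M_j` with `j ≥ i`, so `π_{i,j} x = x`.
Replacement in `M_i` then yields `b = {z | π_{i,∞} z ∈ x} ∈ M_i`, and `π_{i,∞} b = x` because `x` is
not moved by the maps `π_{i,j}`. Hence `x ∈ M_∞` after all. -/

universe u

section Bridge

/-- The class `S` with true membership, as a structure in the sense of Mathlib's model theory. -/
instance (S : Set ZFSet) : setL.Structure S where
  funMap f := f.elim
  RelMap R v := match R with
    | SetRelSym.mem => (v 0 : ZFSet) ∈ (v 1 : ZFSet)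

variable {S T : Set ZFSet.{u}} {n : ℕ}

theorem tval_coe (v : Fin n → S) (t : setL.Term (Empty ⊕ Fin n)) :
    tval (fun i => v i) t = t.realize (Sum.elim default v) := by
  rcases t with (e | i) | f
  · exact e.elim
  · rfl
  · exact f.elim

theorem coe_snoc (v : Fin n → S) (x : S) :
    (fun i => ((Fin.snoc v x : Fin (n + 1) → S) i : ZFSet)) =
      Fin.snoc (α := fun _ => ZFSet) (fun i => v i) x :=
  Fin.comp_snoc (Subtype.val : S → ZFSet) v x

theorem zsat_coe_iff_realize (φ : setL.BoundedFormula Empty n) (v : Fin n → S) :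
    ZSat S φ (fun i => v i) ↔ φ.Realize default v := by
  induction φ with
  | falsum => rfl
  | equal t u =>
    simp only [ZSat, tval_coe, BoundedFormula.Realize, Subtype.ext_iff]
  | rel R ts =>
    cases R
    simp only [ZSat, tval_coe]
    rfl
  | imp φ ψ ihφ ihψ =>
    simp only [ZSat, BoundedFormula.Realize, ihφ, ihψ]
  | all φ ih =>
    simp only [ZSat, BoundedFormula.Realize, ← ih, Subtype.forall, coe_snoc]

theorem exists_zsat_iff_realize (φ : setL.Formula (Fin n)) :
    ∃ ψ : setL.BoundedFormula Empty n, ∀ (S : Set ZFSet) (v : Fin n → S),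
      ZSat S ψ (fun i => v i) ↔ φ.Realize v :=
  ⟨BoundedFormula.relabel (n := n) (k := 0) Sum.inr φ, fun S v => by
    rw [zsat_coe_iff_realize, BoundedFormula.realize_relabel]
    exact iff_of_eq (congrArg (BoundedFormula.Realize φ v) (Subsingleton.elim _ _))⟩

theorem IsElem.apply_mem {π : ZFSet → ZFSet} (h : IsElem S T π) (x : S) : π x ∈ T :=
  h.1 x x.2

/-- A class elementary embedding as an elementary embedding of first-order structures. -/
def IsElem.toElementaryEmbedding {π : ZFSet → ZFSet} (h : IsElem S T π) : S ↪ₑ[setL] T where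
  toFun x := ⟨π x, h.apply_mem x⟩
  map_formula' n φ v := by
    obtain ⟨ψ, hψ⟩ := exists_zsat_iff_realize φ
    rw [← hψ, ← hψ]
    exact (h.2 n ψ _ fun i => (v i).2).symm

theorem IsElem.injective {π : ZFSet → ZFSet} (h : IsElem S T π) {x y : S} (hxy : π x = π y) :
    x = y :=
  h.toElementaryEmbedding.injective (Subtype.ext hxy)

theorem IsElem.mem_iff {π : ZFSet → ZFSet} (h : IsElem S T π) (x y : S) :
    π x ∈ π y ↔ (x : ZFSet) ∈ (y : ZFSet) :=
  h.toElementaryEmbedding.map_rel SetRelSym.mem ![x, y]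

end Bridge

section UniformDefinability

variable {L : Language} {J P A B : Type*} {K : J → Type*} [∀ j, L.Structure (K j)]

variable (L) in
/-- A family of relations `R j` on the `A`-tuples of structures `K j` is uniformly definable
if a single first-order formula defines every `R j`, where the finitely many parameters occurring
in the formula are taken from the family `par j : P → K j`. -/
def UniformlyDefinable (par : ∀ j, P → K j) (R : ∀ j, (A → K j) → Prop) : Prop :=
  ∃ φ : L.Formula (P ⊕ A), ∀ j v, R j v ↔ φ.Realize (Sum.elim (par j) v)

namespace UniformlyDefinable

variable {par : ∀ j, P → K j} {R S : ∀ j, (A → K j) → Prop}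

theorem congr (h : UniformlyDefinable L par R) (hRS : ∀ j v, S j v ↔ R j v) :
    UniformlyDefinable L par S :=
  let ⟨φ, hφ⟩ := h
  ⟨φ, fun j v => (hRS j v).trans (hφ j v)⟩

theorem imp (hR : UniformlyDefinable L par R) (hS : UniformlyDefinable L par S) :
    UniformlyDefinable L par fun j v => R j v → S j v :=
  let ⟨φ, hφ⟩ := hR
  let ⟨ψ, hψ⟩ := hS
  ⟨φ.imp ψ, fun j v => (imp_congr (hφ j v) (hψ j v)).trans Formula.realize_imp.symm⟩

theorem const (p : Prop) : UniformlyDefinable L par fun _ (_ : A → _) => p := by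
  by_cases hp : p
  · exact ⟨⊤, fun _ _ => iff_of_true hp (Formula.realize_top.2 trivial)⟩
  · exact ⟨⊥, fun _ _ => iff_of_false hp id⟩

theorem not (hR : UniformlyDefinable L par R) : UniformlyDefinable L par fun j v => ¬R j v :=
  hR.imp (const False)

theorem and (hR : UniformlyDefinable L par R) (hS : UniformlyDefinable L par S) :
    UniformlyDefinable L par fun j v => R j v ∧ S j v :=
  (hR.imp hS.not).not.congr fun _ _ => by tauto

theorem iff (hR : UniformlyDefinable L par R) (hS : UniformlyDefinable L par S) :
    UniformlyDefinable L par fun j v => (R j v ↔ S j v) :=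
  ((hR.imp hS).and (hS.imp hR)).congr fun _ _ => iff_iff_implies_and_implies

theorem finite_forall {I : Type*} [Finite I] {R : I → ∀ j, (A → K j) → Prop}
    (hR : ∀ i, UniformlyDefinable L par (R i)) :
    UniformlyDefinable L par fun j v => ∀ i, R i j v := by
  choose φ hφ using hR
  exact ⟨Formula.iInf φ, fun j v => by simp only [Formula.realize_iInf, hφ]⟩

theorem finite_exists {I : Type*} [Finite I] {R : I → ∀ j, (A → K j) → Prop}
    (hR : ∀ i, UniformlyDefinable L par (R i)) :
    UniformlyDefinable L par fun j v => ∃ i, R i j v :=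
  (finite_forall fun i => (hR i).not).not.congr fun _ _ => by push Not; rfl

theorem subst (hR : UniformlyDefinable L par R) (f : A → P ⊕ B) :
    UniformlyDefinable L par fun j (v : B → K j) => R j (Sum.elim (par j) v ∘ f) :=
  let ⟨φ, hφ⟩ := hR
  ⟨φ.relabel (Sum.elim Sum.inl f), fun j v => by
    simp only [hφ, Formula.realize_relabel, Sum.comp_elim, Sum.elim_comp_inl]⟩

theorem relabel (hR : UniformlyDefinable L par R) (f : A → B) :
    UniformlyDefinable L par fun j (v : B → K j) => R j (v ∘ f) :=
  hR.subst (Sum.inr ∘ f)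

theorem forall_tuple [Finite B] {R : ∀ j, (A → K j) → (B → K j) → Prop}
    (hR : UniformlyDefinable L par fun j (v : A ⊕ B → K j) => R j (v ∘ Sum.inl) (v ∘ Sum.inr)) :
    UniformlyDefinable L par fun j v => ∀ w : B → K j, R j v w := by
  obtain ⟨φ, hφ⟩ := hR
  refine ⟨(φ.relabel (Equiv.sumAssoc P A B).symm).iAlls B, fun j v => ?_⟩
  rw [Formula.realize_iAlls]
  refine forall_congr' fun w => ?_
  rw [Formula.realize_relabel]
  refine (hφ j (Sum.elim v w)).trans (iff_of_eq (congrArg φ.Realize ?_))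
  funext x
  rcases x with p | a | b <;> rfl

theorem forall_elem {R : ∀ j, (A → K j) → K j → Prop}
    (hR : UniformlyDefinable L par fun j (v : A ⊕ Unit → K j) =>
      R j (v ∘ Sum.inl) (v (Sum.inr ()))) :
    UniformlyDefinable L par fun j v => ∀ x : K j, R j v x :=
  (forall_tuple (R := fun j v (w : Unit → K j) => R j v (w ())) hR).congr fun _ _ =>
    ⟨fun h w => h (w ()), fun h x => h fun _ => x⟩

theorem exists_elem {R : ∀ j, (A → K j) → K j → Prop}
    (hR : UniformlyDefinable L par fun j (v : A ⊕ Unit → K j) =>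
      R j (v ∘ Sum.inl) (v (Sum.inr ()))) :
    UniformlyDefinable L par fun j v => ∃ x : K j, R j v x :=
  (forall_elem (R := fun j v x => ¬R j v x) hR.not).not.congr fun _ _ => by push Not; rfl

theorem map_iff (hR : UniformlyDefinable L par R) {j k : J} (g : K j ↪ₑ[L] K k)
    (hg : ∀ p, g (par j p) = par k p) (v : A → K j) : R k (g ∘ v) ↔ R j v := by
  obtain ⟨φ, hφ⟩ := hR
  rw [hφ, hφ, ← g.map_formula φ, Sum.comp_elim]
  exact iff_of_eq (congrArg (fun q => φ.Realize (Sum.elim q _)) (funext fun p => (hg p).symm))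

theorem comp {I : Type*} (hR : UniformlyDefinable L par R) (f : I → J) :
    UniformlyDefinable L (fun i => par (f i)) fun i => R (f i) :=
  let ⟨φ, hφ⟩ := hR
  ⟨φ, fun i => hφ (f i)⟩

open Classical in
theorem exists_fin_par (hR : UniformlyDefinable L par R) :
    ∃ (n : ℕ) (q : Fin n → P), UniformlyDefinable L (fun j => par j ∘ q) R := by
  obtain ⟨φ, hφ⟩ := hR
  let s := φ.freeVarFinset.toLeft
  let f : φ.freeVarFinset → Fin s.card ⊕ A
    | ⟨Sum.inl p, hp⟩ => Sum.inl (s.equivFin ⟨p, Finset.mem_toLeft.2 hp⟩)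
    | ⟨Sum.inr a, _⟩ => Sum.inr a
  refine ⟨s.card, fun k => (s.equivFin.symm k).1, φ.restrictFreeVar f, fun j v => ?_⟩
  refine (hφ j v).trans (BoundedFormula.realize_restrictFreeVar _ ?_).symm
  rintro ⟨p | a, ha⟩
  · simp [f]
  · rfl

end UniformlyDefinable

end UniformDefinability

section SetModels

/-- `x` is the element of the class `S` defined over `S` by the formula `φ` and the
parameters `p`. -/
def IsDefinedBy {n : ℕ} (S : Set ZFSet) (φ : setL.BoundedFormula Empty (n + 1))
    (p : Fin n → ZFSet) (x : ZFSet) : Prop :=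
  ∀ y ∈ S, ZSat S φ (Fin.snoc p y) ↔ y = x

variable {J P A : Type*} {K : J → Set ZFSet} {par : ∀ j, P → K j}

namespace UniformlyDefinable

theorem mem (a b : A) :
    UniformlyDefinable setL par fun _ v => (v a : ZFSet) ∈ (v b : ZFSet) :=
  ⟨Relations.formula₂ (L := setL) SetRelSym.mem (Term.var (Sum.inr a)) (Term.var (Sum.inr b)),
    fun _ _ => Iff.rfl⟩

theorem eq (a b : A) : UniformlyDefinable setL par fun _ v => (v a : ZFSet) = v b :=
  ⟨Term.equal (Term.var (Sum.inr a)) (Term.var (Sum.inr b)), fun _ _ => Subtype.ext_iff.symm⟩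

theorem zsat {n : ℕ} (φ : setL.BoundedFormula Empty n) :
    UniformlyDefinable setL par fun j (v : Fin n → K j) => ZSat (K j) φ fun i => v i :=
  ⟨φ.toFormula.relabel (Sum.elim Empty.elim Sum.inr), fun j v => by
    simp only [zsat_coe_iff_realize, Formula.realize_relabel, BoundedFormula.realize_toFormula]
    exact iff_of_eq (congrArg (φ.Realize · v) (Subsingleton.elim _ _))⟩

theorem forall_mem_of_subset {N : ∀ j, (A → K j) → Set ZFSet} (hNK : ∀ j v, N j v ⊆ K j)
    (hN : UniformlyDefinable setL par fun j (v : A ⊕ Unit → K j) =>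
      (v (Sum.inr ()) : ZFSet) ∈ N j (v ∘ Sum.inl))
    {R : ∀ j, (A → K j) → ZFSet → Prop}
    (hR : UniformlyDefinable setL par fun j (v : A ⊕ Unit → K j) =>
      R j (v ∘ Sum.inl) (v (Sum.inr ()))) :
    UniformlyDefinable setL par fun j v => ∀ z ∈ N j v, R j v z :=
  (forall_elem (R := fun j v (x : K j) => (x : ZFSet) ∈ N j v → R j v x) (hN.imp hR)).congr
    fun j v => ⟨fun h x => h x, fun h z hz => h ⟨z, hNK j v hz⟩ hz⟩

theorem forall_mem (hK : ∀ j, IsTransClass (K j)) (a : A) {R : ∀ j, (A → K j) → ZFSet → Prop}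
    (hR : UniformlyDefinable setL par fun j (v : A ⊕ Unit → K j) =>
      R j (v ∘ Sum.inl) (v (Sum.inr ()))) :
    UniformlyDefinable setL par fun j v => ∀ z ∈ (v a : ZFSet), R j v z :=
  forall_mem_of_subset (N := fun _ v => {z | z ∈ (v a : ZFSet)}) (fun j v z => hK j _ (v a).2 z)
    (mem _ _) hR

theorem isTransitive (hK : ∀ j, IsTransClass (K j)) (a : A) :
    UniformlyDefinable setL par fun _ v => (v a : ZFSet).IsTransitive :=
  forall_mem hK a (R := fun _ v y => y ⊆ (v a : ZFSet))
    (forall_mem hK (Sum.inr ()) (R := fun _ v z => z ∈ (v (Sum.inl a) : ZFSet)) (mem _ _))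

theorem isOrdinal (hK : ∀ j, IsTransClass (K j)) (a : A) :
    UniformlyDefinable setL par fun _ v => (v a : ZFSet).IsOrdinal :=
  ((isTransitive hK a).and (forall_mem hK a (R := fun _ _ y => y.IsTransitive)
    (isTransitive hK _))).congr fun _ _ => ZFSet.isOrdinal_iff_forall_mem_isTransitive

theorem zsat_snoc {N : J → Set ZFSet} {n : ℕ} {φ : setL.BoundedFormula Empty (n + 1)}
    (h : UniformlyDefinable setL par fun j (v : Fin (n + 1) → K j) => ZSat (N j) φ fun i => v i)
    (f : Fin n → A) (a : A) :
    UniformlyDefinable setL par fun j v =>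
      ZSat (N j) φ (Fin.snoc (fun i => (v (f i) : ZFSet)) (v a)) :=
  (h.relabel (Fin.snoc f a)).congr fun j v =>
    iff_of_eq (congrArg (ZSat (N j) φ) (Fin.comp_snoc (fun b => (v b : ZFSet)) f a).symm)

theorem zsat_relativized {N : Set ZFSet} (hNK : ∀ j, N ⊆ K j)
    (hN : UniformlyDefinable setL par fun j (v : Unit → K j) => (v () : ZFSet) ∈ N) {n : ℕ}
    (φ : setL.BoundedFormula Empty n) :
    UniformlyDefinable setL par fun j (v : Fin n → K j) => ZSat N φ fun i => v i := by
  induction φ with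
  | falsum => exact const False
  | equal t u =>
    exact (zsat (K := K) (.equal t u)).congr fun _ _ => Iff.rfl
  | rel R ts =>
    cases R
    exact (zsat (K := K) (.rel SetRelSym.mem ts)).congr fun _ _ => Iff.rfl
  | imp φ ψ ihφ ihψ => exact ihφ.imp ihψ
  | @all n φ ih =>
    refine forall_mem_of_subset (N := fun _ _ => N)
      (R := fun _ v x => ZSat N φ (Fin.snoc (fun i => (v i : ZFSet)) x)) (fun j _ => hNK j)
      (hN.relabel fun _ => Sum.inr ())
      (ih.zsat_snoc Sum.inl (Sum.inr ()))

theorem isDefinedBy {N : J → Set ZFSet} (hNK : ∀ j, N j ⊆ K j)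
    (hN : UniformlyDefinable setL par fun j (v : Unit → K j) => (v () : ZFSet) ∈ N j) {n : ℕ}
    {φ : setL.BoundedFormula Empty (n + 1)}
    (hφ : UniformlyDefinable setL par fun j (v : Fin (n + 1) → K j) => ZSat (N j) φ fun i => v i)
    (f : Fin n → A) (a : A) :
    UniformlyDefinable setL par fun j v =>
      IsDefinedBy (N j) φ (fun i => (v (f i) : ZFSet)) (v a) :=
  forall_mem_of_subset (N := fun j _ => N j)
    (R := fun j v y => ZSat (N j) φ (Fin.snoc (fun i => (v (f i) : ZFSet)) y) ↔ y = v a)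
    (fun j _ => hNK j) (hN.relabel fun _ => Sum.inr ())
    ((hφ.zsat_snoc (Sum.inl ∘ f) _).iff (eq _ _))

theorem lexLT {n : ℕ} (f g : Fin n → A) :
    UniformlyDefinable setL par fun _ v =>
      Pi.Lex (· < ·) (· ∈ ·) (fun i => (v (f i) : ZFSet)) fun i => (v (g i) : ZFSet) :=
  finite_exists fun i => (finite_forall fun k =>
    (const (k < i)).imp (eq (f k) (g k))).and (mem _ _)

end UniformlyDefinable

end SetModels

section VeqHOD

variable {S T : Set ZFSet.{u}} {π : ZFSet → ZFSet} {n : ℕ}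

theorem IsElem.isOrdinal_iff (h : IsElem S T π) (hS : IsTransClass S) (hT : IsTransClass T)
    (x : S) : (π x).IsOrdinal ↔ (x : ZFSet).IsOrdinal :=
  (UniformlyDefinable.isOrdinal (K := fun U : {U // IsTransClass U} => U.1)
    (par := fun _ => Empty.elim) (fun U => U.2) ()).map_iff (j := ⟨S, hS⟩) (k := ⟨T, hT⟩)
    h.toElementaryEmbedding nofun fun _ => x

theorem IsElem.isDefinedBy_iff (h : IsElem S T π) (φ : setL.BoundedFormula Empty (n + 1))
    (p : Fin n → S) (x : S) :
    IsDefinedBy T φ (fun i => π (p i)) (π x) ↔ IsDefinedBy S φ (fun i => p i) x := by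
  have hdef : UniformlyDefinable setL (K := fun U : Set ZFSet.{u} => U)
      (par := fun _ => Empty.elim) fun U (v : Fin n ⊕ Unit → U) =>
        IsDefinedBy U φ (fun i => (v (Sum.inl i) : ZFSet)) (v (Sum.inr ())) :=
    .isDefinedBy (fun _ => subset_rfl) ((UniformlyDefinable.const True).congr fun _ v => by simp)
      (.zsat φ) _ _
  exact hdef.map_iff h.toElementaryEmbedding nofun (Sum.elim p fun _ => x)

theorem IsDirLimit.modelsVeqHOD {ι : Type} [PartialOrder ι] {D : DirSystem.{u} ι}
    {limit : Set ZFSet.{u}} {e : ι → ZFSet → ZFSet} (h : IsDirLimit D limit e)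
    (hhod : ∀ i, ModelsVeqHOD (D.M i).toSet) : ModelsVeqHOD limit := by
  intro y hy
  obtain ⟨i, x, hx, rfl⟩ := h.exhaust y hy
  obtain ⟨n, φ, p, hp, hφ⟩ := hhod i x hx
  refine ⟨n, φ, fun k => e i (p k), fun k => ⟨(h.elem i).1 _ (hp k).1, ?_⟩, ?_⟩
  · exact ((h.elem i).isOrdinal_iff (D.zfc i).1.1 h.trans ⟨p k, (hp k).1⟩).2 (hp k).2
  · exact ((h.elem i).isDefinedBy_iff φ (fun k => ⟨p k, (hp k).1⟩) ⟨x, hx⟩).2 hφ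

end VeqHOD

section Comprehension

variable {S : Set ZFSet.{u}} {P : Type*} {par : P → S}

theorem UniformlyDefinable.exists_zsat_append {n : ℕ} {R : (Fin n → S) → Prop}
    (hR : UniformlyDefinable setL (fun _ : Unit => par) fun _ => R) :
    ∃ (m : ℕ) (p : Fin m → ZFSet) (ψ : setL.BoundedFormula Empty (m + n)), (∀ i, p i ∈ S) ∧
      ∀ v : Fin n → S, ZSat S ψ (Fin.append p fun i => (v i : ZFSet)) ↔ R v := by
  obtain ⟨m, q, φ, hφ⟩ := hR.exists_fin_par
  obtain ⟨ψ, hψ⟩ := exists_zsat_iff_realize (φ.relabel finSumFinEquiv)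
  refine ⟨m, fun i => par (q i), ψ, fun i => (par (q i)).2, fun v => ?_⟩
  have append_coe : (Fin.append (fun i => (par (q i) : ZFSet)) fun i => (v i : ZFSet)) =
      fun i => ((Fin.append (par ∘ q) v i : S) : ZFSet) := by
    funext i
    cases i using Fin.addCases <;> simp
  have append_comp : Fin.append (par ∘ q) v ∘ finSumFinEquiv = Sum.elim (par ∘ q) v := by
    funext i
    cases i <;> simp
  rw [append_coe, hψ, Formula.realize_relabel, append_comp]
  exact (hφ () v).symm

namespace ModelsZFCminus

theorem exists_separation (hS : ModelsZFCminus S) {R : S → Prop}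
    (hR : UniformlyDefinable setL (fun _ : Unit => par) fun _ (v : Unit → S) => R (v ()))
    (a : S) : ∃ b : S, ∀ y : S, (y : ZFSet) ∈ (b : ZFSet) ↔ (y : ZFSet) ∈ (a : ZFSet) ∧ R y := by
  obtain ⟨_, _, _, _, _, hsep, _⟩ := hS
  obtain ⟨m, p, ψ, hp, hψ⟩ := (hR.relabel fun _ => (0 : Fin 1)).exists_zsat_append
  obtain ⟨b, hb, hmem⟩ := hsep m ψ p hp a a.2
  refine ⟨⟨b, hb⟩, fun y => (hmem y).trans (and_congr_right fun _ => ?_)⟩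
  rw [← Fin.append_right_eq_snoc p fun _ => (y : ZFSet)]
  exact hψ fun _ => y

theorem exists_replacement (hS : ModelsZFCminus S) {R : S → S → Prop}
    (hR : UniformlyDefinable setL (fun _ : Unit => par) fun _ (v : Fin 2 → S) => R (v 0) (v 1))
    (a : S) (hfun : ∀ x y z : S, R x y → R x z → y = z) :
    ∃ b : S, ∀ y : S, (y : ZFSet) ∈ (b : ZFSet) ↔ ∃ x : S, (x : ZFSet) ∈ (a : ZFSet) ∧ R x y := by
  obtain ⟨dom, hdom⟩ := hS.exists_separation (R := fun x => ∃ y, R x y)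
    (.exists_elem (R := fun _ v y => R (v ()) y) (hR.relabel ![Sum.inl (), Sum.inr ()])) a
  obtain ⟨htrans, _, _, _, _, _, hrep, _⟩ := hS
  obtain ⟨m, p, ψ, hp, hψ⟩ := hR.exists_zsat_append
  have zsat_iff (x y : S) :
      ZSat S ψ (Fin.snoc (Fin.snoc (α := fun _ => ZFSet) p x) (y : ZFSet)) ↔ R x y := by
    rw [← Fin.append_right_eq_snoc p fun _ => (x : ZFSet), ← Fin.append_snoc]
    refine Iff.trans (iff_of_eq (congrArg (fun w => ZSat S ψ (Fin.append p w)) ?_)) (hψ ![x, y])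
    funext i
    fin_cases i <;> rfl
  have mem_of_mem_dom {x : ZFSet} (hx : x ∈ (dom : ZFSet)) : x ∈ S := htrans dom dom.2 x hx
  obtain ⟨b, hb, hmem⟩ := hrep m ψ p hp dom dom.2 fun x hx => by
    lift x to S using mem_of_mem_dom hx
    obtain ⟨-, y, hxy⟩ := (hdom x).1 hx
    refine ⟨y, ⟨y.2, (zsat_iff x y).2 hxy⟩, fun z ⟨hz, hxz⟩ => ?_⟩
    lift z to S using hz
    exact congrArg Subtype.val (hfun x z y ((zsat_iff x z).1 hxz) hxy)
  refine ⟨⟨b, hb⟩, fun y => (hmem y).trans ⟨?_, ?_⟩⟩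
  · rintro ⟨x, hx, -, hxy⟩
    lift x to S using mem_of_mem_dom hx
    exact ⟨x, ((hdom x).1 hx).1, (zsat_iff x y).1 hxy⟩
  · rintro ⟨x, hx, hxy⟩
    exact ⟨x, (hdom x).2 ⟨hx, y, hxy⟩, y.2, (zsat_iff x y).2 hxy⟩

end ModelsZFCminus

end Comprehension

namespace DirSystem

variable {ι : Type} [PartialOrder ι] (D : DirSystem.{u} ι) {i j : ι}

/-- The map `π_{i,j}` of a directed system as an elementary embedding of structures. -/
def map (hij : i ≤ j) : (D.M i).toSet ↪ₑ[setL] (D.M j).toSet :=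
  (D.elem i j hij).toElementaryEmbedding

/-- A family of relations on the models `M j` with `j ≥ i` is tail-definable from `i` if it is
uniformly definable from parameters in `M i`, interpreted in `M j` along `π_{i,j}`. -/
abbrev TailDefinable (i : ι) {A : Type*}
    (R : ∀ j : Set.Ici i, (A → (D.M j).toSet) → Prop) : Prop :=
  UniformlyDefinable setL (K := fun j : Set.Ici i => (D.M j).toSet) (fun j => D.map j.2) R

variable {D}

theorem isTransClass (i : ι) : IsTransClass (D.M i).toSet :=
  (D.zfc i).1.1

theorem TailDefinable.map_iff {A : Type*} {R : ∀ j : Set.Ici i, (A → (D.M j).toSet) → Prop}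
    (hR : D.TailDefinable i R) (hij : i ≤ j) (v : A → (D.M i).toSet) :
    R ⟨j, hij⟩ (D.map hij ∘ v) ↔ R ⟨i, le_rfl⟩ v :=
  UniformlyDefinable.map_iff hR (j := ⟨i, le_rfl⟩) (k := ⟨j, hij⟩) (D.map hij)
    (fun p => Subtype.ext (D.map_comp i i j le_rfl hij p p.2)) v

end DirSystem

section EventualDefinability

open Filter

variable {ι : Type} [PartialOrder ι] {D : DirSystem.{u} ι}

theorem UnifDef1.eventually_subset {A : Set ι} {R : ι → Set ZFSet} (h : UnifDef1 D A R) :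
    ∀ᶠ i in atTop, ∀ j ≥ i, R j ⊆ (D.M j).toSet := by
  obtain ⟨i₀, -, a, -, φ, hφ⟩ := h
  filter_upwards [eventually_ge_atTop i₀] with i hi j hij
  exact (hφ j (hi.trans hij)).2.1

theorem UnifDef1.eventually_tailDefinable {A : Set ι} {R : ι → Set ZFSet} (h : UnifDef1 D A R) :
    ∀ᶠ i in atTop, D.TailDefinable i fun j (v : Unit → _) => (v () : ZFSet) ∈ R j := by
  obtain ⟨i₀, -, a, ha, φ, hφ⟩ := h
  filter_upwards [eventually_ge_atTop i₀] with i hi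
  refine ((UniformlyDefinable.zsat φ).subst ![Sum.inr (), Sum.inl (D.map hi ⟨a, ha⟩)]).congr ?_
  intro j v
  rw [(hφ j (hi.trans j.2)).2.2 _ (v ()).2, ← D.map_comp i₀ i j hi j.2 a ha]
  refine iff_of_eq (congrArg _ (funext fun k => ?_))
  fin_cases k <;> rfl

theorem UnifDef2.eventually_tailDefinable {R : ι → ZFSet → ZFSet → Prop} (h : UnifDef2 D R) :
    ∀ᶠ i in atTop, D.TailDefinable i fun j (v : Fin 2 → _) => R j (v 0) (v 1) := by
  obtain ⟨i₀, a, ha, φ, hφ⟩ := h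
  filter_upwards [eventually_ge_atTop i₀] with i hi
  refine ((UniformlyDefinable.zsat φ).subst
    ![Sum.inr 0, Sum.inr 1, Sum.inl (D.map hi ⟨a, ha⟩)]).congr ?_
  intro j v
  rw [(hφ j (hi.trans j.2)).2 _ (v 0).2 _ (v 1).2, ← D.map_comp i₀ i j hi j.2 a ha]
  refine iff_of_eq (congrArg _ (funext fun k => ?_))
  fin_cases k <;> rfl

end EventualDefinability

section FixedPoints

variable {ι : Type} [PartialOrder ι] {D : DirSystem.{u} ι} {i : ι} {n : ℕ}

theorem lex_trichotomy_of_isOrdinal {v w : Fin n → ZFSet} (hv : ∀ k, (v k).IsOrdinal)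
    (hw : ∀ k, (w k).IsOrdinal) :
    Pi.Lex (· < ·) (· ∈ ·) v w ∨ v = w ∨ Pi.Lex (· < ·) (· ∈ ·) w v := by
  by_cases hvw : v = w
  · exact Or.inr (Or.inl hvw)
  obtain ⟨k, hk, hmin⟩ := wellFounded_lt.has_min {k | v k ≠ w k} (Function.ne_iff.1 hvw)
  have heq : ∀ l < k, v l = w l := fun l hl => not_not.1 fun hne => hmin l hne hl
  rcases (hv k).mem_trichotomous (hw k) with hlt | hkeq | hgt
  · exact Or.inl ⟨k, heq, hlt⟩
  · exact absurd hkeq hk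
  · exact Or.inr (Or.inr ⟨k, fun l hl => (heq l hl).symm, hgt⟩)

theorem DirSystem.TailDefinable.exists_fixed {Q : (Fin n → ZFSet) → ZFSet → Prop}
    (hQ : D.TailDefinable i fun j (v : Fin n ⊕ Unit → (D.M j).toSet) =>
      Q (fun k => v (Sum.inl k)) (v (Sum.inr ())))
    (hord : ∀ v y, Q v y → ∀ k, (v k).IsOrdinal)
    (hmem : ∀ v y, Q v y → ∀ j ≥ i, (∀ k, v k ∈ D.M j) ∧ y ∈ D.M j)
    (huniq : ∀ v y z, Q v y → Q v z → y = z) (hex : ∃ v y, Q v y) :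
    ∃ v y, Q v y ∧ ∀ j ≥ i, D.pi i j y = y := by
  obtain ⟨v, ⟨y, hvy⟩, hmin⟩ :=
    (Pi.Lex.wellFounded (· < ·) fun _ => ZFSet.mem_wf).has_min {v : Fin n → ZFSet | ∃ y, Q v y} hex
  have hleast : D.TailDefinable i fun j (v : Fin n ⊕ Unit → (D.M j).toSet) =>
      Q (fun k => v (Sum.inl k)) (v (Sum.inr ())) ∧ ∀ w : Fin n ⊕ Unit → (D.M j).toSet,
        Q (fun k => w (Sum.inl k)) (w (Sum.inr ())) →
          ¬Pi.Lex (· < ·) (· ∈ ·) (fun k => (w (Sum.inl k) : ZFSet)) fun k => v (Sum.inl k) :=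
    hQ.and (.forall_tuple ((hQ.relabel Sum.inr).imp (UniformlyDefinable.lexLT _ _).not))
  -- `π_{i,j}` preserves leastness, so the image of `v` and `v` itself are both least: they agree.
  refine ⟨v, y, hvy, fun j hij => ?_⟩
  obtain ⟨hvi, hyi⟩ := hmem v y hvy i le_rfl
  obtain ⟨hvj, hyj⟩ := hmem v y hvy j hij
  obtain ⟨hπ, hπmin⟩ := (hleast.map_iff hij
    (Sum.elim (fun k => ⟨v k, hvi k⟩) fun _ => ⟨y, hyi⟩)).2 ⟨hvy, fun w hw => hmin _ ⟨_, hw⟩⟩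
  have hπv : (fun k => D.pi i j (v k)) = v := by
    rcases lex_trichotomy_of_isOrdinal (hord _ _ hπ) (hord v y hvy) with hlt | heq | hgt
    · exact absurd hlt (hmin _ ⟨_, hπ⟩)
    · exact heq
    · exact absurd hgt (hπmin (Sum.elim (fun k => ⟨v k, hvj k⟩) fun _ => ⟨y, hyj⟩) hvy)
  exact huniq v _ _ (hπv ▸ hπ) hvy

theorem ModelsVeqHOD.exists_fixed {N : Set ZFSet.{u}} (hhod : ModelsVeqHOD N)
    (hNM : ∀ j ≥ i, N ⊆ (D.M j).toSet)
    (hN : D.TailDefinable i fun j (v : Unit → (D.M j).toSet) => (v () : ZFSet) ∈ N)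
    {R : ZFSet → Prop} (hR : D.TailDefinable i fun j (v : Unit → (D.M j).toSet) => R (v ()))
    (hex : ∃ x ∈ N, R x) : ∃ x ∈ N, R x ∧ ∀ j ≥ i, D.pi i j x = x := by
  obtain ⟨x, hxN, hx⟩ := hex
  obtain ⟨n, φ, p, hp, hφ⟩ := hhod x hxN
  have hNK (j : Set.Ici i) : N ⊆ (D.M j).toSet := hNM j j.2
  have hQ : D.TailDefinable i fun j (v : Fin n ⊕ Unit → (D.M j).toSet) =>
      (∀ k, (v (Sum.inl k) : ZFSet) ∈ N ∧ (v (Sum.inl k) : ZFSet).IsOrdinal) ∧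
        ((v (Sum.inr ()) : ZFSet) ∈ N ∧ R (v (Sum.inr ()))) ∧
        IsDefinedBy N φ (fun k => (v (Sum.inl k) : ZFSet)) (v (Sum.inr ())) :=
    .and (.finite_forall fun k => .and (hN.relabel fun _ => Sum.inl k)
      (UniformlyDefinable.isOrdinal (fun j : Set.Ici i => DirSystem.isTransClass j.1) _))
      (.and (.and (hN.relabel Sum.inr) (hR.relabel Sum.inr))
        (.isDefinedBy hNK hN (.zsat_relativized hNK hN φ) _ _))
  obtain ⟨v, y, ⟨-, ⟨hyN, hy⟩, -⟩, hfix⟩ := DirSystem.TailDefinable.exists_fixed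
    (Q := fun v y => (∀ k, v k ∈ N ∧ (v k).IsOrdinal) ∧ (y ∈ N ∧ R y) ∧ IsDefinedBy N φ v y) hQ
    (fun v y h k => (h.1 k).2)
    (fun v y h j hij => ⟨fun k => hNM j hij (h.1 k).1, hNM j hij h.2.1.1⟩)
    (fun v y z h h' => (h'.2.2 y h.2.1.1).1 ((h.2.2 y h.2.1.1).2 rfl))
    ⟨p, x, hp, ⟨hxN, hx⟩, hφ⟩
  exact ⟨y, hyN, hy, hfix⟩

end FixedPoints

namespace IsDirLimit

variable {ι : Type} [PartialOrder ι] {D : DirSystem.{u} ι} {limit : Set ZFSet.{u}}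
  {e : ι → ZFSet → ZFSet}

theorem exists_ge_apply_eq (h : IsDirLimit D limit e) (i : ι) {y : ZFSet} (hy : y ∈ limit) :
    ∃ j, ∃ _ : i ≤ j, ∃ x : (D.M j).toSet, e j x = y := by
  obtain ⟨k, x, hx, rfl⟩ := h.exhaust y hy
  obtain ⟨j, hij, hkj⟩ := D.directed i k
  exact ⟨j, hij, D.map hkj ⟨x, hx⟩, h.compat k j hkj x hx⟩

theorem mem_of_fixed (h : IsDirLimit D limit e) {i : ι}
    (he : D.TailDefinable i fun j (v : Fin 2 → (D.M j).toSet) => e j (v 0) = v 1)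
    (x : (D.M i).toSet) (hfix : ∀ j ≥ i, D.pi i j x = x) (hx : ∀ z ∈ (x : ZFSet), z ∈ limit) :
    (x : ZFSet) ∈ limit := by
  -- `b` is the preimage of `x` under `e i`. Since `x` is fixed, `π_{i,j} b` is the preimage of `x`
  -- under `e j`, so `x` and `e i b` have the same elements in the limit.
  obtain ⟨b, hb⟩ := (D.zfc i).1.exists_replacement (R := fun w z => e i z = w)
    ((he.comp fun _ : Unit => ⟨i, le_rfl⟩).relabel ![1, 0]) x
    fun w z z' hz hz' => (h.elem i).injective (hz.trans hz'.symm)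
  have hpre : D.TailDefinable i fun j (v : Fin 2 → (D.M j).toSet) => ∀ z : (D.M j).toSet,
      (z : ZFSet) ∈ (v 0 : ZFSet) ↔
        ∃ w : (D.M j).toSet, (w : ZFSet) ∈ (v 1 : ZFSet) ∧ e j z = w := by
    exact .forall_elem (.iff (.mem _ _) (.exists_elem (.and (.mem _ _)
      (he.relabel ![Sum.inl (Sum.inr ()), Sum.inr ()]))))
  have mem_map_iff {j : ι} (hij : i ≤ j) (z : (D.M j).toSet) :
      (z : ZFSet) ∈ D.pi i j b ↔ e j z ∈ (x : ZFSet) := by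
    rw [← hfix j hij]
    refine ((hpre.map_iff hij ![b, x]).2 hb z).trans ⟨?_, fun hez => ?_⟩
    · rintro ⟨w, hw, hzw⟩
      exact hzw ▸ hw
    · exact ⟨⟨e j z, DirSystem.isTransClass j _ (D.map hij x).2 _ hez⟩, hez, rfl⟩
  suffices hxb : (x : ZFSet) = e i b from hxb ▸ (h.elem i).apply_mem b
  have mem_iff {y : ZFSet} (hy : y ∈ limit) : y ∈ (x : ZFSet) ↔ y ∈ e i b := by
    obtain ⟨j, hij, z, rfl⟩ := h.exists_ge_apply_eq i hy
    rw [← mem_map_iff hij, ← h.compat i j hij b b.2]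
    exact ((h.elem j).mem_iff z (D.map hij b)).symm
  ext y
  exact ⟨fun hy => (mem_iff (hx y hy)).1 hy,
    fun hy => (mem_iff (h.trans _ ((h.elem i).apply_mem b) y hy)).2 hy⟩

end IsDirLimit

theorem direct_limit_subset_general {ι : Type} [PartialOrder ι] {D : DirSystem.{u} ι}
    {N limit : Set ZFSet.{u}} {e : ι → ZFSet → ZFSet} (hD : IsDirLimit D limit e)
    (hN : IsTransClass N) (hhod : ModelsVeqHOD N) (hNdef : UnifDef1 D Set.univ fun _ => N)
    (hlimdef : UnifDef1 D Set.univ fun _ => limit)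
    (hedef : UnifDef2 D fun i x y => x ∈ D.M i ∧ e i x = y) : N ⊆ limit := by
  have : Nonempty ι := ⟨hNdef.choose⟩
  have : IsDirectedOrder ι := ⟨D.directed⟩
  obtain ⟨i, ⟨⟨hNi, hNdefi⟩, hlimi⟩, hei⟩ := (((hNdef.eventually_subset.and
    hNdef.eventually_tailDefinable).and hlimdef.eventually_tailDefinable).and
    hedef.eventually_tailDefinable).exists
  by_contra hnot
  obtain ⟨x₀, ⟨hx₀N, hx₀⟩, hmin⟩ :=
    ZFSet.mem_wf.has_min {x | x ∈ N ∧ x ∉ limit} (Set.not_subset.1 hnot)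
  have hx₀sub (z) (hz : z ∈ x₀) : z ∈ limit :=
    by_contra fun hzlim => hmin z ⟨hN x₀ hx₀N z hz, hzlim⟩ hz
  obtain ⟨x, hxN, ⟨hx, hxsub⟩, hfix⟩ := hhod.exists_fixed hNi hNdefi
    (R := fun x => x ∉ limit ∧ ∀ z ∈ x, z ∈ limit)
    (hlimi.not.and (.forall_mem (fun j : Set.Ici i => DirSystem.isTransClass j.1) _
      (hlimi.relabel Sum.inr)))
    ⟨x₀, hx₀N, hx₀, hx₀sub⟩
  exact hx (hD.mem_of_fixed (hei.congr fun j v => by simp) ⟨x, hNi i le_rfl hxN⟩ hfix hxsub)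

/-- Let `C` and `D` be well-founded directed systems of models of set
theory over the same directed partial order, with (transitivized) direct limits `Nlim`, `Mlim`
and direct limit maps `σe`, `πe`.  Suppose (1) `C.M i ⊆ D.M i` for all `i`; (2) each `C.M i`
satisfies `V = HOD`; and (3) `Nlim`, `Mlim`, and the family `{πe i}` are uniformly definable
over `D`.  Then `Nlim ⊆ Mlim`. -/
theorem direct_limit_subset {ι : Type} [PartialOrder ι]
    (C D : DirSystem ι)
    (Nlim Mlim : Set ZFSet) (σe πe : ι → ZFSet → ZFSet)
    (hC : IsDirLimit C Nlim σe) (hD : IsDirLimit D Mlim πe)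
    (hsub : ∀ i, (C.M i : ZFSet) ⊆ D.M i)
    (hhod : ∀ i, ModelsVeqHOD (C.M i).toSet)
    (hNdef : UnifDef1 D Set.univ (fun _ => Nlim))
    (hMdef : UnifDef1 D Set.univ (fun _ => Mlim))
    (hπdef : UnifDef2 D (fun i x y => x ∈ D.M i ∧ πe i x = y)) :
    Nlim ⊆ Mlim := by
  exact direct_limit_subset_general hD hC.trans (hC.modelsVeqHOD hhod) hNdef hMdef hπdef
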